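/- arXiv:1906.04969 — 3 statements merged into one kernel-verified Lean document; each statement's English description precedes it below -/
import Mathlib

section
/- Let (A, μ, α) be a multiplicative Hom-associative algebra over a field K in which the linear map α is invertible. Then μ' := α⁻¹ ∘ μ is an associative multiplication on A, i.e. μ'(μ'(x,y), z) = μ'(x, μ'(y,z)) for all x, y, z ∈ A, and α is an algebra automorphism of (A, μ'), i.e. μ'(α(x), α(y)) = α(μ'(x,y)) for all x, y ∈ A. -/
/-- For a multiplicative Hom-associative algebra `(A, μ, α)` with `α` invertible,
`μ' := α⁻¹ ∘ μ` is associative and `α` is an algebra automorphism of `(A, μ')`. -/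
theorem stmt_1 {K A : Type*} [Field K] [AddCommGroup A] [Module K A]
    (μ : A →ₗ[K] A →ₗ[K] A) (α : A ≃ₗ[K] A)
    (hassoc : ∀ x y z : A, μ (α x) (μ y z) = μ (μ x y) (α z))
    (hmult : ∀ x y : A, α (μ x y) = μ (α x) (α y))
    (μ' : A → A → A) (hμ' : ∀ x y : A, μ' x y = α.symm (μ x y)) :
    (∀ x y z : A, μ' (μ' x y) z = μ' x (μ' y z)) ∧
    (∀ x y : A, μ' (α x) (α y) = α (μ' x y)) := by
  refine ⟨fun x y z => ?_, fun x y => ?_⟩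
  · -- Applying `α` twice turns associativity of the twisted product into the Hom-associativity of `μ`.
    apply α.injective
    apply α.injective
    simp only [hμ', LinearEquiv.apply_symm_apply, hmult]
    exact (hassoc x y z).symm
  · simp only [hμ', ← hmult, LinearEquiv.apply_symm_apply, LinearEquiv.symm_apply_apply]
end

section
/- Let (A₁, μ₁, α₁) and (A₂, μ₂, α₂) be Hom-associative algebras over a field K and let φ : A₁ → A₂ be an invertible linear map which is a morphism of Hom-associative algebras, i.e. φ(μ₁(x,y)) = μ₂(φ(x), φ(y)) and α₂ ∘ φ = φ ∘ α₁. Suppose (A₁, μ₁, α₁) is of associative type with compatible associative algebra (A₁, ν₁), i.e. ν₁ is an associative bilinear multiplication on A₁ with μ₁ = α₁ ∘ ν₁. Then ν₂ := φ ∘ ν₁ ∘ (φ⁻¹ ⊗ φ⁻¹) is an associative multiplication on A₂, μ₂ = α₂ ∘ ν₂, and φ is an algebra morphism from (A₁, ν₁) to (A₂, ν₂). -/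
/-- Transport of associative type along an invertible morphism of Hom-associative algebras. -/
theorem stmt_2 {K A₁ A₂ : Type*} [Field K] [AddCommGroup A₁] [Module K A₁]
    [AddCommGroup A₂] [Module K A₂]
    (μ₁ : A₁ →ₗ[K] A₁ →ₗ[K] A₁) (α₁ : A₁ →ₗ[K] A₁)
    (μ₂ : A₂ →ₗ[K] A₂ →ₗ[K] A₂) (α₂ : A₂ →ₗ[K] A₂)
    (hassoc₁ : ∀ x y z : A₁, μ₁ (α₁ x) (μ₁ y z) = μ₁ (μ₁ x y) (α₁ z))
    (hassoc₂ : ∀ x y z : A₂, μ₂ (α₂ x) (μ₂ y z) = μ₂ (μ₂ x y) (α₂ z))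
    (φ : A₁ ≃ₗ[K] A₂)
    (hφμ : ∀ x y : A₁, φ (μ₁ x y) = μ₂ (φ x) (φ y))
    (hφα : ∀ x : A₁, α₂ (φ x) = φ (α₁ x))
    (ν₁ : A₁ →ₗ[K] A₁ →ₗ[K] A₁)
    (hν₁assoc : ∀ x y z : A₁, ν₁ (ν₁ x y) z = ν₁ x (ν₁ y z))
    (hcompat₁ : ∀ x y : A₁, μ₁ x y = α₁ (ν₁ x y))
    (ν₂ : A₂ → A₂ → A₂)
    (hν₂ : ∀ u v : A₂, ν₂ u v = φ (ν₁ (φ.symm u) (φ.symm v))) :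
    (∀ u v w : A₂, ν₂ (ν₂ u v) w = ν₂ u (ν₂ v w)) ∧
    (∀ u v : A₂, μ₂ u v = α₂ (ν₂ u v)) ∧
    (∀ x y : A₁, φ (ν₁ x y) = ν₂ (φ x) (φ y)) := by
  refine ⟨fun u v w => ?_, fun u v => ?_, fun x y => ?_⟩
  · simp only [hν₂, LinearEquiv.symm_apply_apply, hν₁assoc]
  · rw [hν₂, hφα, ← hcompat₁, hφμ, LinearEquiv.apply_symm_apply, LinearEquiv.apply_symm_apply]
  · rw [hν₂, LinearEquiv.symm_apply_apply, LinearEquiv.symm_apply_apply]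
end

section
/- Let (A, μ, α) be a multiplicative Hom-associative algebra over a field K, let k, s be nonnegative integers, let D be an α^k-derivation of (A, μ, α) and D' an α^s-derivation of (A, μ, α). Then their commutator [D, D'] := D ∘ D' − D' ∘ D is an α^{k+s}-derivation of (A, μ, α): [D,D'] ∘ α = α ∘ [D,D'], and [D,D'](μ(f,g)) = μ([D,D'](f), α^{k+s}(g)) + μ(α^{k+s}(f), [D,D'](g)) for all f, g ∈ A. -/
/-- The commutator of an `α^k`-derivation and an `α^s`-derivation is an
`α^(k+s)`-derivation. -/
theorem stmt_15 {K A : Type*} [Field K] [AddCommGroup A] [Module K A]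
    (μ : A →ₗ[K] A →ₗ[K] A) (α : Module.End K A)
    (hassoc : ∀ x y z : A, μ (α x) (μ y z) = μ (μ x y) (α z))
    (hmult : ∀ x y : A, α (μ x y) = μ (α x) (α y))
    (k s : ℕ) (D D' : Module.End K A)
    (hDα : ∀ x : A, D (α x) = α (D x))
    (hD : ∀ f g : A, D (μ f g) = μ (D f) ((α ^ k) g) + μ ((α ^ k) f) (D g))
    (hD'α : ∀ x : A, D' (α x) = α (D' x))
    (hD' : ∀ f g : A, D' (μ f g) = μ (D' f) ((α ^ s) g) + μ ((α ^ s) f) (D' g))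
    (C : A → A) (hC : ∀ x : A, C x = D (D' x) - D' (D x)) :
    (∀ x : A, C (α x) = α (C x)) ∧
    (∀ f g : A, C (μ f g) = μ (C f) ((α ^ (k + s)) g) + μ ((α ^ (k + s)) f) (C g)) := by
  have pow_comm (E : Module.End K A) (hE : ∀ x, E (α x) = α (E x)) (n : ℕ) (x : A) :
      E ((α ^ n) x) = (α ^ n) (E x) :=
    LinearMap.congr_fun ((show Commute E α from LinearMap.ext hE).pow_right n).eq x
  have pow_ks (x : A) : (α ^ k) ((α ^ s) x) = (α ^ (k + s)) x := by
    rw [pow_add, Module.End.mul_apply]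
  have pow_sk (x : A) : (α ^ s) ((α ^ k) x) = (α ^ (k + s)) x := by
    rw [add_comm, pow_add, Module.End.mul_apply]
  refine ⟨fun x => by simp only [hC, hDα, hD'α, map_sub], fun f g => ?_⟩
  -- The mixed terms `μ (D f) (D' g)` and `μ (D' f) (D g)`, twisted by powers of `α`, cancel
  -- once `D` and `D'` are moved past those powers.
  simp only [hC, hD, hD', map_add, map_sub, LinearMap.sub_apply, pow_comm D hDα,
    pow_comm D' hD'α, pow_ks, pow_sk]
  abel
end
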